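/- Let G be a single-decision causal influence diagram with decision D and let X be a variable of G other than D. Suppose that for every parent W of D and every utility node U it fails to hold that simultaneously (1) G contains a directed path from X to W, (2) G contains a directed path from D to U, and (3) W is not d-separated from U by ({D} ∪ Pa_D) \ {W}. Then no SCIM compatible with G has a response incentive on X. -/

import Mathlib

attribute [local instance] Classical.propDecidable

noncomputable section

/-! ### d-separation in a directed graph -/

/-- `b` is a collider on a path segment `a - b - c`. -/
def IsCollider {V : Type} (E : V → V → Prop) (a b c : V) : Prop := E a b ∧ E c b

/-- The triple `a - b - c` on an undirected path blocks the path w.r.t. `Z`: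
either the middle node is a non-collider (chain or fork) belonging to `Z`, or it is a
collider such that neither it nor any of its descendants belongs to `Z`. -/
def BlockedTriple {V : Type} (E : V → V → Prop) (Z : Set V) (a b c : V) : Prop :=
  (¬ IsCollider E a b c ∧ b ∈ Z) ∨
    (IsCollider E a b c ∧ ∀ w, Relation.ReflTransGen E b w → w ∉ Z)

/-- An undirected path: a nonempty list of distinct vertices in which consecutive
vertices are joined by an edge in one direction or the other. -/
def IsUPath {V : Type} (E : V → V → Prop) (p : List V) : Prop :=
  p ≠ [] ∧ p.Nodup ∧ p.Chain' (fun a b => E a b ∨ E b a)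

/-- A path is d-separated (blocked) by `Z` if some consecutive triple blocks it. -/
def BlockedPath {V : Type} (E : V → V → Prop) (Z : Set V) (p : List V) : Prop :=
  ∃ l₁ a b c l₂, p = l₁ ++ a :: b :: c :: l₂ ∧ BlockedTriple E Z a b c

/-- `Z` d-separates the node sets `S` and `T`: every undirected path from a node of `S`
to a node of `T` is blocked by `Z`. -/
def DSep {V : Type} (E : V → V → Prop) (S T Z : Set V) : Prop :=
  ∀ p : List V, IsUPath E p → (∃ s ∈ S, p.head? = some s) →
    (∃ t ∈ T, p.getLast? = some t) → BlockedPath E Z p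

/-! ### Causal influence diagrams and structural causal influence models -/

/-- A single-decision causal influence diagram: a finite DAG whose vertices are
partitioned into structure nodes, one decision node and utility nodes
(the utility nodes having no children). -/
structure CID (V : Type) where
  edge : V → V → Prop
  acyclic : ∀ v, ¬ Relation.TransGen edge v v
  decision : V
  utility : Finset V
  decision_not_utility : decision ∉ utility
  utility_no_children : ∀ u ∈ utility, ∀ v, ¬ edge u v

/-- A (single-decision) structural causal influence model over a CID: finite nonempty
domains for every variable, one finite-domain exogenous variable per variable, structural
functions for every non-decision variable, real-valued (injectively embedded, i.e. the
domain is a subset of ℝ) utility variables, and mutually independent exogenous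
distributions. -/
structure SCIM (V : Type) extends CID V where
  dom : V → Type
  dom_fintype : ∀ v, Fintype (dom v)
  dom_nonempty : ∀ v, Nonempty (dom v)
  edom : V → Type
  edom_fintype : ∀ v, Fintype (edom v)
  edom_nonempty : ∀ v, Nonempty (edom v)
  utilVal : ∀ v, dom v → ℝ
  utilVal_inj : ∀ v ∈ utility, Function.Injective (utilVal v)
  f : ∀ v, v ≠ decision → (∀ w, edge w v → dom w) → edom v → dom v
  μ : ∀ v, edom v → ℝ
  μ_nonneg : ∀ v e, 0 ≤ μ v e
  μ_sum : ∀ v, ∑ e ∈ @Finset.univ (edom v) (edom_fintype v), μ v e = 1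

variable {V : Type} [Fintype V] [DecidableEq V]

instance (M : SCIM V) (v : V) : Fintype (M.dom v) := M.dom_fintype v
instance (M : SCIM V) (v : V) : Nonempty (M.dom v) := M.dom_nonempty v
instance (M : SCIM V) (v : V) : Fintype (M.edom v) := M.edom_fintype v
instance (M : SCIM V) (v : V) : Nonempty (M.edom v) := M.edom_nonempty v

namespace SCIM

variable (M : SCIM V)

/-- A joint setting of the exogenous variables. -/
abbrev Env := ∀ v, M.edom v

/-- Joint probability of an exogenous setting (the exogenous variables are independent). -/
def prob (ε : M.Env) : ℝ := ∏ v, M.μ v (ε v)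

/-- The type of structural mechanisms for the vertex `v`. -/
def Mechanism (v : V) : Type := (∀ w, M.edge w v → M.dom w) → M.edom v → M.dom v

/-- A policy: a structural function for the decision node. -/
abbrev Policy := M.Mechanism M.decision

theorem edge_wf : WellFounded M.edge := by
  haveI : IsTrans V (Relation.TransGen M.edge) := ⟨fun _ _ _ h h' => h.trans h'⟩
  haveI : IsIrrefl V (Relation.TransGen M.edge) := ⟨M.acyclic⟩
  exact Subrelation.wf (fun h => Relation.TransGen.single h)
    (Finite.wellFounded_of_trans_of_irrefl _)

/-- The unique solution of the structural equations `mech` given exogenous setting `ε`. -/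
def solve (mech : ∀ v, M.Mechanism v) (ε : M.Env) : ∀ v, M.dom v :=
  WellFounded.fix (C := fun v => M.dom v) M.edge_wf
    (fun v IH => mech v (fun w hw => IH w hw) (ε v))

/-- The mechanisms of the SCM `M_π` obtained by fixing the policy `π`. -/
def polMech (π : M.Policy) : ∀ v, M.Mechanism v :=
  fun v => if h : v = M.decision then cast (congrArg M.Mechanism h).symm π else M.f v h

/-- Apply an intervention (a partial assignment `ι` of values) to mechanisms:
intervened variables are set to constants. -/
def doMech (mech : ∀ v, M.Mechanism v) (ι : ∀ v, Option (M.dom v)) : ∀ v, M.Mechanism v :=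
  fun v => match ι v with
    | some x => fun _ _ => x
    | none => mech v

/-- The single intervention `do(X = x)` as a partial assignment. -/
def single (X : V) (x : M.dom X) : ∀ v, Option (M.dom v) :=
  fun v => if h : v = X then some (cast (congrArg M.dom h).symm x) else none

/-- The value `W(ε)` of each variable in `M_π`. -/
def val (π : M.Policy) (ε : M.Env) : ∀ v, M.dom v := M.solve (M.polMech π) ε

/-- The potential response: the value of each variable in the submodel of `M_π`
given by the intervention `ι`. -/
def valDo (π : M.Policy) (ι : ∀ v, Option (M.dom v)) (ε : M.Env) : ∀ v, M.dom v :=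
  M.solve (M.doMech (M.polMech π) ι) ε

/-- Total utility of an assignment of values to the variables. -/
def totUtil (a : ∀ v, M.dom v) : ℝ := ∑ v ∈ M.utility, M.utilVal v (a v)

/-- Expected total utility of the policy `π`. -/
def EU (π : M.Policy) : ℝ := ∑ ε : M.Env, M.prob ε * M.totUtil (M.val π ε)

/-- An optimal policy maximizes expected total utility. -/
def Optimal (π : M.Policy) : Prop := ∀ π' : M.Policy, M.EU π' ≤ M.EU π

/-- A decision context: a joint value of the parents of the decision. -/
abbrev Ctx := ∀ w, M.edge w M.decision → M.dom w

/-- The decision context realized by the exogenous setting `ε` in `M_π`. -/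
def ctx (π : M.Policy) (ε : M.Env) : M.Ctx := fun w _ => M.val π ε w

/-- Probability of a decision context in `M_π`. -/
def ctxProb (π : M.Policy) (pa : M.Ctx) : ℝ :=
  ∑ ε : M.Env, if M.ctx π ε = pa then M.prob ε else 0

/-- Conditional expectation of `g` given the decision context `pa` in `M_π`. -/
def condExp (π : M.Policy) (pa : M.Ctx) (g : M.Env → ℝ) : ℝ :=
  (∑ ε : M.Env, if M.ctx π ε = pa then M.prob ε * g ε else 0) / M.ctxProb π pa

/-- The nested potential response `𝒰_{X_d}(ε)`: total utility when `X` is set to the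
value it would take under `do(D = d)`, everything else following `M_π`. -/
def nestedU (π : M.Policy) (X : V) (d : M.dom M.decision) (ε : M.Env) : ℝ :=
  M.totUtil (M.valDo π (M.single X (M.valDo π (M.single M.decision d) ε X)) ε)

/-- Control incentive on `X`: under every optimal policy, in some positive-probability
decision context some alternative decision `d` changes expected utility through `X`. -/
def ControlIncentive (X : V) : Prop :=
  ∀ π : M.Policy, M.Optimal π →
    ∃ pa : M.Ctx, 0 < M.ctxProb π pa ∧ ∃ d : M.dom M.decision,
      M.condExp π pa (M.nestedU π X d) ≠
        M.condExp π pa (fun ε => M.totUtil (M.val π ε))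

/-- Response incentive on `X`: under every optimal policy some intervention on `X`
changes the decision for some exogenous setting. -/
def ResponseIncentive (X : V) : Prop :=
  ∀ π : M.Policy, M.Optimal π →
    ∃ (x : M.dom X) (ε : M.Env),
      M.valDo π (M.single X x) ε M.decision ≠ M.val π ε M.decision

/-- Conditional probability of `event` given `cond` in `M_π`. -/
def cprob (π : M.Policy) (event cond : M.Env → Prop) : ℝ :=
  (∑ ε : M.Env, if cond ε ∧ event ε then M.prob ε else 0) /
    (∑ ε : M.Env, if cond ε then M.prob ε else 0)

/-- Counterfactual fairness of a policy `π` with respect to a protected attribute `A`: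
conditional on any positive-probability decision context and value of `A`, intervening
on `A` does not change the distribution of the decision. -/
def CFair (π : M.Policy) (A : V) : Prop :=
  ∀ (d : M.dom M.decision) (pa : M.Ctx) (a a' : M.dom A),
    (0 < ∑ ε : M.Env, if M.ctx π ε = pa ∧ M.val π ε A = a then M.prob ε else 0) →
      M.cprob π (fun ε => M.valDo π (M.single A a') ε M.decision = d)
          (fun ε => M.ctx π ε = pa ∧ M.val π ε A = a) =
        M.cprob π (fun ε => M.val π ε M.decision = d)
          (fun ε => M.ctx π ε = pa ∧ M.val π ε A = a)

/-- Expected value of the sum of utility variables in `S`. -/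
def EUOn (S : Finset V) (π : M.Policy) : ℝ :=
  ∑ ε : M.Env, M.prob ε * ∑ v ∈ S, M.utilVal v (M.val π ε v)

/-- The policy obtained from `π` by replacing the observations of the decision-parents
that are descendants of `X` by the fixed values `p`. -/
def modPolicy (π : M.Policy) (X : V) (p : M.Ctx) : M.Policy :=
  fun pa e =>
    π (fun w hw => if Relation.ReflTransGen M.edge X w then p w hw else pa w hw) e

end SCIM

/-- The graphical criterion for control incentives: a directed path `D ⇝ X ⇝ U`
for some utility node `U`. -/
def CICriterion {V : Type} (G : CID V) (X : V) : Prop :=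
  Relation.ReflTransGen G.edge G.decision X ∧
    ∃ u ∈ G.utility, Relation.ReflTransGen G.edge X u

/-- The graphical criterion for response incentives: a directed path from `X` to some
parent `W` of the decision `D`, a directed path from `D` to some utility node `U`, and
`W` d-connected to `U` given `({D} ∪ Pa_D) \ {W}`. -/
def RICriterion {V : Type} (G : CID V) (X : V) : Prop :=
  ∃ W, G.edge W G.decision ∧ ∃ u ∈ G.utility,
    Relation.ReflTransGen G.edge X W ∧
    Relation.ReflTransGen G.edge G.decision u ∧
    ¬ DSep G.edge {W} {u} (({G.decision} ∪ {w | G.edge w G.decision}) \ {W})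

end

noncomputable section

/-! ### Trails and d-connection -/

/-- One step of a trail, seen from its far end: either an edge `a → b` whose tail avoids `B`,
or an edge `b → a` whose tail avoids `B` and whose head lies in `N`. -/
def TrailStep {V : Type} (E : V → V → Prop) (B N : Set V) (a b : V) : Prop :=
  (E a b ∧ a ∉ B) ∨ (E b a ∧ b ∉ B ∧ a ∈ N)

theorem exists_nodup_isChain_of_reflTransGen {V : Type} {S : V → V → Prop} {a b : V}
    (h : Relation.ReflTransGen S a b) :
    ∃ q : List V, (a :: q).Nodup ∧ (a :: q).IsChain S ∧ (a :: q).getLast? = some b := by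
  induction h using Relation.ReflTransGen.head_induction_on with
  | refl => exact ⟨[], by simp, by simp, by simp⟩
  | @head a c hac _ ih =>
    obtain ⟨q, hn, hc, hl⟩ := ih
    by_cases ha : a ∈ c :: q
    · obtain ⟨l, r, hlr⟩ := List.append_of_mem ha
      rw [hlr] at hn hc hl
      refine ⟨r, (List.nodup_append.1 hn).2.1, (List.isChain_append.1 hc).2.1, ?_⟩
      simpa [List.getLast?_append] using hl
    · exact ⟨c :: q, List.nodup_cons.2 ⟨ha, hn⟩, List.isChain_cons_cons.2 ⟨hac, hc⟩,
        by simpa using hl⟩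

theorem not_dsep_of_isChain {V : Type} {E : V → V → Prop}
    (hE : ∀ v, ¬ Relation.TransGen E v v) {B N Z : Set V} (hZB : Z ⊆ B)
    (hN : ∀ b ∈ N, ∃ w ∈ Z, Relation.ReflTransGen E b w) {r u : V} {q : List V}
    (hn : (r :: q).Nodup) (hl : (r :: q).getLast? = some u)
    (hc : q.IsChain (TrailStep E B N))
    (hr : ∀ c ∈ q.head?, TrailStep E B N r c ∨ E r c) : ¬ DSep E {r} {u} Z := by
  have hasymm : ∀ a b, E a b → ¬ E b a := fun a b h h' =>
    hE a ((Relation.TransGen.single h).tail h')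
  have hw : (r :: q).IsChain (fun a b => TrailStep E B N a b ∨ E a b) :=
    List.isChain_cons.2 ⟨hr, hc.imp fun _ _ h => Or.inl h⟩
  intro hsep
  obtain ⟨l₁, a, b, c, l₂, hp, hb⟩ := hsep (r :: q)
    ⟨by simp, hn, hw.imp fun a b h => by unfold TrailStep at h; tauto⟩
    ⟨r, rfl, rfl⟩ ⟨u, rfl, hl⟩
  have hab : TrailStep E B N a b ∨ E a b := by
    rw [hp] at hw
    exact (List.isChain_cons_cons.1 (List.isChain_append.1 hw).2.1).1
  have hbc : TrailStep E B N b c := by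
    cases l₁ with
    | nil =>
      obtain ⟨rfl, rfl⟩ := List.cons.inj hp
      exact (List.isChain_cons_cons.1 hc).1
    | cons x l =>
      obtain ⟨rfl, rfl⟩ := List.cons.inj hp
      have := (List.isChain_append.1 hc).2.1
      exact (List.isChain_cons_cons.1 (List.isChain_cons_cons.1 this).2).1
  have h1 := hasymm a b
  have h2 := hasymm b c
  rcases hb with ⟨hcol, hbZ⟩ | ⟨⟨hab', hcb⟩, hdesc⟩
  · have := hZB hbZ
    unfold IsCollider at hcol
    unfold TrailStep at hab hbc
    tauto
  · have hbN : b ∈ N := by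
      unfold TrailStep at hbc
      tauto
    obtain ⟨w, hwZ, hbw⟩ := hN b hbN
    exact hdesc w hbw hwZ

namespace CID

variable {V : Type} (G : CID V)

/-- The decision together with its parents. -/
def observed : Set V := {v | v = G.decision ∨ G.edge v G.decision}

/-- Vertices joined by a trail, active given the decision and its parents,
to a utility node downstream of the decision. -/
def utilityConnected : Set V :=
  {v | ∃ u ∈ G.utility, Relation.ReflTransGen G.edge G.decision u ∧
    Relation.ReflTransGen
      (TrailStep G.edge G.observed {v | Relation.ReflTransGen G.edge v G.decision}) v u}

variable {G}

theorem not_mem_observed_of_mem_utility {u : V} (hu : u ∈ G.utility) : u ∉ G.observed := by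
  rintro (rfl | h)
  · exact G.decision_not_utility hu
  · exact G.utility_no_children u hu _ h

theorem mem_utilityConnected_of_mem_utility {u : V} (hu : u ∈ G.utility)
    (hD : Relation.ReflTransGen G.edge G.decision u) : u ∈ G.utilityConnected :=
  ⟨u, hu, hD, .refl⟩

theorem mem_utilityConnected_of_edge {v c : V} (hvc : G.edge v c) (hv : v ∉ G.observed)
    (hc : c ∈ G.utilityConnected) : v ∈ G.utilityConnected := by
  obtain ⟨u, hu, hD, h⟩ := hc
  exact ⟨u, hu, hD, .head (Or.inl ⟨hvc, hv⟩) h⟩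

theorem mem_utilityConnected_of_edge_ancestor {v c : V} (hvc : G.edge v c)
    (hv : v ∉ G.observed) (hv' : v ∈ G.utilityConnected)
    (hc : Relation.ReflTransGen G.edge c G.decision) : c ∈ G.utilityConnected := by
  obtain ⟨u, hu, hD, h⟩ := hv'
  exact ⟨u, hu, hD, .head (Or.inr ⟨hvc, hv, hc⟩) h⟩

theorem decision_not_mem_utilityConnected : G.decision ∉ G.utilityConnected := by
  rintro ⟨u, hu, -, h⟩
  rcases h.cases_head with h | ⟨c, h | h, -⟩
  · exact G.decision_not_utility (h ▸ hu)
  · exact h.2 (Or.inl rfl)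
  · exact h.2.1 (Or.inr h.1)

theorem exists_not_dsep_of_utilityConnected {r : V} (hr : G.edge r G.decision)
    (h : r ∈ G.utilityConnected ∨ ∃ c ∈ G.utilityConnected, G.edge r c) :
    ∃ u ∈ G.utility, Relation.ReflTransGen G.edge G.decision u ∧
      ¬ DSep G.edge {r} {u} (({G.decision} ∪ {w | G.edge w G.decision}) \ {r}) := by
  have hZB : (({G.decision} ∪ {w | G.edge w G.decision}) \ {r} : Set V) ⊆ G.observed := by
    rintro w ⟨hw, -⟩
    exact hw
  have hN : ∀ b ∈ {v | Relation.ReflTransGen G.edge v G.decision},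
      ∃ w ∈ (({G.decision} ∪ {w | G.edge w G.decision}) \ {r} : Set V),
        Relation.ReflTransGen G.edge b w := by
    intro b hb
    refine ⟨G.decision, ⟨Or.inl rfl, ?_⟩, hb⟩
    rintro (h : G.decision = r)
    exact G.acyclic r (.single (by rw [h] at hr; exact hr))
  rcases h with ⟨u, hu, hD, h⟩ | ⟨c, ⟨u, hu, hD, h⟩, hrc⟩
  · obtain ⟨q, hn, hc, hl⟩ := exists_nodup_isChain_of_reflTransGen h
    obtain ⟨h1, h2⟩ := List.isChain_cons.1 hc
    exact ⟨u, hu, hD, not_dsep_of_isChain G.acyclic hZB hN hn hl h2 fun c hc => Or.inl (h1 c hc)⟩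
  · obtain ⟨q, hn, hc, hl⟩ := exists_nodup_isChain_of_reflTransGen h
    refine ⟨u, hu, hD, ?_⟩
    by_cases hmem : r ∈ c :: q
    · obtain ⟨l, t, hlt⟩ := List.append_of_mem hmem
      rw [hlt] at hn hc hl
      obtain ⟨h1, h2⟩ := List.isChain_cons.1 (List.isChain_append.1 hc).2.1
      exact not_dsep_of_isChain G.acyclic hZB hN (List.nodup_append.1 hn).2.1
        (by simpa [List.getLast?_append] using hl) h2 fun c hc => Or.inl (h1 c hc)
    · refine not_dsep_of_isChain G.acyclic hZB hN (List.nodup_cons.2 ⟨hmem, hn⟩)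
        (by simpa using hl) hc ?_
      rintro _ ⟨⟩
      exact Or.inr hrc

end CID

/-! ### Structural equations -/

namespace SCIM

variable {V : Type} [Fintype V] [DecidableEq V] (M : SCIM V)

theorem solve_eq (mech : ∀ v, M.Mechanism v) (ε : M.Env) (v : V) :
    M.solve mech ε v = mech v (fun w _ => M.solve mech ε w) (ε v) :=
  WellFounded.fix_eq _ _ _

theorem eq_solve {mech : ∀ v, M.Mechanism v} {ε : M.Env} {a : ∀ v, M.dom v}
    (ha : ∀ v, a v = mech v (fun w _ => a w) (ε v)) : a = M.solve mech ε := by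
  funext v
  induction v using M.edge_wf.induction with
  | h v ih =>
    rw [ha, solve_eq]
    congr 1
    funext w hw
    exact ih w hw

theorem polMech_decision (π : M.Policy) : M.polMech π M.decision = π := by
  simp [polMech]

theorem polMech_of_ne (π : M.Policy) {v : V} (hv : v ≠ M.decision) :
    M.polMech π v = M.f v hv :=
  dif_neg hv

theorem val_decision (π : M.Policy) (ε : M.Env) :
    M.val π ε M.decision = π (M.ctx π ε) (ε M.decision) := by
  unfold val
  rw [solve_eq, polMech_decision]
  rfl

theorem val_of_ne (π : M.Policy) (ε : M.Env) {v : V} (hv : v ≠ M.decision) :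
    M.val π ε v = M.f v hv (fun w _ => M.val π ε w) (ε v) := by
  unfold val
  rw [solve_eq, polMech_of_ne _ _ hv]

theorem valDo_single_of_not_reflTransGen (π : M.Policy) {X : V} (x : M.dom X) (ε : M.Env)
    {v : V} (hv : ¬ Relation.ReflTransGen M.edge X v) :
    M.valDo π (M.single X x) ε v = M.val π ε v := by
  induction v using M.edge_wf.induction with
  | h v ih =>
    have hvX : v ≠ X := by
      rintro rfl
      exact hv .refl
    unfold valDo val at ih ⊢
    rw [solve_eq, solve_eq M (M.polMech π)]
    simp only [doMech, single, hvX, dite_false]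
    congr 1
    funext w hw
    exact ih w hw fun h => hv (h.tail hw)

theorem valDo_single_decision (π : M.Policy) {X : V} (hX : X ≠ M.decision) (x : M.dom X)
    (ε : M.Env) : M.valDo π (M.single X x) ε M.decision =
      π (fun w _ => M.valDo π (M.single X x) ε w) (ε M.decision) := by
  unfold valDo
  rw [solve_eq]
  simp only [doMech, single, hX.symm, dite_false, polMech_decision]

theorem val_congr_of_not_reflTransGen (π π' : M.Policy) (ε : M.Env) {v : V}
    (hv : ¬ Relation.ReflTransGen M.edge M.decision v) : M.val π ε v = M.val π' ε v := by
  induction v using M.edge_wf.induction with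
  | h v ih =>
    have hvD : v ≠ M.decision := by
      rintro rfl
      exact hv .refl
    rw [val_of_ne _ _ _ hvD, val_of_ne _ _ _ hvD]
    congr 1
    funext w hw
    exact ih w hw fun h => hv (h.tail hw)

/-- The mechanisms in which the decision and its parents are held fixed. -/
def ctxMech (o : M.Ctx) (d : M.dom M.decision) : ∀ v, M.Mechanism v :=
  fun v => if h : v = M.decision then fun _ _ => cast (congrArg M.dom h).symm d
    else if h' : M.edge v M.decision then fun _ _ => o v h' else M.f v h

theorem ctxMech_of_not_edge (o : M.Ctx) (d : M.dom M.decision) {v : V} (hv : v ≠ M.decision)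
    (hv' : ¬ M.edge v M.decision) : M.ctxMech o d v = M.f v hv :=
  (dif_neg hv).trans (dif_neg hv')

/-- The values of the variables when the decision context is held at `o` and the decision
at `d`. -/
def ctxVal (o : M.Ctx) (d : M.dom M.decision) (ε : M.Env) : ∀ v, M.dom v :=
  M.solve (M.ctxMech o d) ε

/-- The value that the structural function of `v` yields when the decision context is held
at `o` and the decision at `d`. -/
def natVal (o : M.Ctx) (d : M.dom M.decision) (ε : M.Env) (v : V) (hv : v ≠ M.decision) :
    M.dom v :=
  M.f v hv (fun w _ => M.ctxVal o d ε w) (ε v)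

theorem ne_decision_of_edge {w : V} (hw : M.edge w M.decision) : w ≠ M.decision := by
  rintro rfl
  exact M.acyclic _ (.single hw)

theorem ctxVal_decision (o : M.Ctx) (d : M.dom M.decision) (ε : M.Env) :
    M.ctxVal o d ε M.decision = d := by
  unfold ctxVal
  rw [solve_eq]
  simp [ctxMech]

theorem ctxVal_parent (o : M.Ctx) (d : M.dom M.decision) (ε : M.Env) {w : V}
    (hw : M.edge w M.decision) : M.ctxVal o d ε w = o w hw := by
  unfold ctxVal
  rw [solve_eq]
  simp [ctxMech, hw, M.ne_decision_of_edge hw]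

theorem ctxVal_eq_natVal (o : M.Ctx) (d : M.dom M.decision) (ε : M.Env) {v : V}
    (hv : v ≠ M.decision) (hv' : ¬ M.edge v M.decision) :
    M.ctxVal o d ε v = M.natVal o d ε v hv := by
  unfold natVal ctxVal
  rw [solve_eq, ctxMech_of_not_edge _ _ _ hv hv']

theorem val_eq_ctxVal_of_ctx_eq {π : M.Policy} {ε : M.Env} {o : M.Ctx} (h : M.ctx π ε = o) :
    M.val π ε = M.ctxVal o (π o (ε M.decision)) ε := by
  subst h
  refine M.eq_solve fun v => ?_
  by_cases hv : v = M.decision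
  · subst hv
    simp [ctxMech, val_decision]
  · by_cases hv' : M.edge v M.decision
    · simp [ctxMech, hv, hv', ctx]
    · rw [ctxMech_of_not_edge _ _ _ hv hv']
      exact M.val_of_ne π ε hv

theorem ctx_eq_iff {π : M.Policy} {ε : M.Env} {o : M.Ctx} :
    M.ctx π ε = o ↔ ∀ w (hw : M.edge w M.decision),
      M.natVal o (π o (ε M.decision)) ε w (M.ne_decision_of_edge hw) = o w hw := by
  constructor
  · intro h w hw
    unfold natVal
    rw [← M.val_eq_ctxVal_of_ctx_eq h, ← M.val_of_ne, ← h]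
    rfl
  · intro h
    have key : M.ctxVal o (π o (ε M.decision)) ε = M.val π ε := by
      refine M.eq_solve fun v => ?_
      by_cases hv : v = M.decision
      · subst hv
        rw [ctxVal_decision, polMech_decision]
        congr 1
        funext w hw
        exact (M.ctxVal_parent _ _ _ hw).symm
      · rw [polMech_of_ne _ _ hv]
        by_cases hv' : M.edge v M.decision
        · rw [ctxVal_parent _ _ _ _ hv', ← h v hv']
          rfl
        · exact M.ctxVal_eq_natVal _ _ _ hv hv'
    funext w hw
    rw [ctx, ← key, ctxVal_parent _ _ _ _ hw]

theorem natVal_congr_of_mem {o o' : M.Ctx} (d : M.dom M.decision) {ε ε' : M.Env}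
    (ho : ∀ w (hw : M.edge w M.decision),
      (w ∈ M.utilityConnected ∨ ∃ c ∈ M.utilityConnected, M.edge w c) → o w hw = o' w hw)
    (hε : ∀ v ∈ M.utilityConnected, ε v = ε' v) {v : V} (hv : v ≠ M.decision)
    (hvC : v ∈ M.utilityConnected) : M.natVal o d ε v hv = M.natVal o' d ε' v hv := by
  induction v using M.edge_wf.induction with
  | h v ih =>
    unfold natVal
    rw [hε v hvC]
    congr 1
    funext w hw
    by_cases hwD : w = M.decision
    · subst hwD
      rw [ctxVal_decision, ctxVal_decision]
    · by_cases hwD' : M.edge w M.decision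
      · rw [ctxVal_parent _ _ _ _ hwD', ctxVal_parent _ _ _ _ hwD']
        exact ho w hwD' (Or.inr ⟨v, hvC, hw⟩)
      · rw [ctxVal_eq_natVal _ _ _ _ hwD hwD', ctxVal_eq_natVal _ _ _ _ hwD hwD']
        exact ih w hw hwD (CID.mem_utilityConnected_of_edge hw (not_or.2 ⟨hwD, hwD'⟩) hvC)

theorem natVal_congr_of_not_mem (o : M.Ctx) (d d' : M.dom M.decision) {ε ε' : M.Env}
    (hε : ∀ v ∉ M.utilityConnected, ε v = ε' v) {v : V} (hv : v ≠ M.decision)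
    (hvC : v ∉ M.utilityConnected) (hvD : Relation.ReflTransGen M.edge v M.decision) :
    M.natVal o d ε v hv = M.natVal o d' ε' v hv := by
  induction v using M.edge_wf.induction with
  | h v ih =>
    unfold natVal
    rw [hε v hvC]
    congr 1
    funext w hw
    have hwD : w ≠ M.decision := by
      rintro rfl
      exact M.acyclic _ (Relation.TransGen.head' hw hvD)
    by_cases hwD' : M.edge w M.decision
    · rw [ctxVal_parent _ _ _ _ hwD', ctxVal_parent _ _ _ _ hwD']
    · rw [ctxVal_eq_natVal _ _ _ _ hwD hwD', ctxVal_eq_natVal _ _ _ _ hwD hwD']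
      exact ih w hw hwD
        (fun h => hvC (CID.mem_utilityConnected_of_edge_ancestor hw (not_or.2 ⟨hwD, hwD'⟩) h hvD))
        (.head hw hvD)

/-! ### Independence of the exogenous variables -/

theorem prob_nonneg (ε : M.Env) : 0 ≤ M.prob ε :=
  Finset.prod_nonneg fun v _ => M.μ_nonneg v _

theorem sum_prob : ∑ ε : M.Env, M.prob ε = 1 := by
  unfold prob
  rw [← Fintype.prod_sum]
  exact Finset.prod_eq_one fun v _ => M.μ_sum v

theorem sum_prob_mul_diag (C : Set V) (φ : M.Env → M.Env → ℝ)
    (hφ : ∀ ε₁ ε₂ ε₁' ε₂', (∀ v ∉ C, ε₁ v = ε₁' v) → (∀ v ∈ C, ε₂ v = ε₂' v) →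
      φ ε₁ ε₂ = φ ε₁' ε₂') :
    ∑ ε, M.prob ε * φ ε ε = ∑ ε, M.prob ε * ∑ ε', M.prob ε' * φ ε ε' := by
  let mix : M.Env → M.Env → M.Env := fun a b v => if v ∈ C then b v else a v
  have hmix : ∀ a b, mix (mix a b) (mix b a) = a := by
    intro a b
    funext v
    by_cases hv : v ∈ C <;> simp [mix, hv]
  let σ : M.Env × M.Env ≃ M.Env × M.Env :=
    ⟨fun p => (mix p.1 p.2, mix p.2 p.1), fun p => (mix p.1 p.2, mix p.2 p.1),
      fun p => Prod.ext (hmix _ _) (hmix _ _), fun p => Prod.ext (hmix _ _) (hmix _ _)⟩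
  have hprob : ∀ a b, M.prob (mix a b) * M.prob (mix b a) = M.prob a * M.prob b := by
    intro a b
    simp only [prob, ← Finset.prod_mul_distrib]
    refine Finset.prod_congr rfl fun v _ => ?_
    by_cases hv : v ∈ C <;> simp [mix, hv, mul_comm]
  calc ∑ ε, M.prob ε * φ ε ε
      = ∑ p : M.Env × M.Env, M.prob p.1 * M.prob p.2 * φ p.1 p.1 := by
        rw [Fintype.sum_prod_type]
        refine Finset.sum_congr rfl fun ε _ => ?_
        simp only [mul_right_comm _ (M.prob _) (φ _ _)]
        rw [← Finset.mul_sum, M.sum_prob, mul_one]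
    _ = ∑ p : M.Env × M.Env, M.prob p.1 * M.prob p.2 * φ p.1 p.2 := by
        refine (Fintype.sum_equiv σ _ _ fun p => ?_).symm
        change _ = M.prob (mix p.1 p.2) * M.prob (mix p.2 p.1) * φ (mix p.1 p.2) (mix p.1 p.2)
        rw [hprob, hφ p.1 p.2 (mix p.1 p.2) (mix p.1 p.2)]
        · intro v hv
          simp [mix, hv]
        · intro v hv
          simp [mix, hv]
    _ = ∑ ε, M.prob ε * ∑ ε', M.prob ε' * φ ε ε' := by
        rw [Fintype.sum_prod_type]
        refine Finset.sum_congr rfl fun ε _ => ?_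
        rw [Finset.mul_sum]
        exact Finset.sum_congr rfl fun ε' _ => mul_assoc _ _ _

/-! ### An optimal policy using only the requisite observations -/

/-- The part of the total utility that the decision can influence. -/
def downUtil (a : ∀ v, M.dom v) : ℝ :=
  ∑ v ∈ M.utility with Relation.ReflTransGen M.edge M.decision v, M.utilVal v (a v)

/-- The context `o` is consistent with `ε` at the decision-parents in `S`. -/
def Consistent (S : Set V) (o : M.Ctx) (d : M.dom M.decision) (ε : M.Env) : Prop :=
  ∀ w (hw : M.edge w M.decision), w ∈ S →
    M.natVal o d ε w (M.ne_decision_of_edge hw) = o w hw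

/-- The unnormalised expected downstream utility of choosing `d` in the context `o`. -/
def score (o : M.Ctx) (d : M.dom M.decision) : ℝ :=
  ∑ ε : M.Env, M.prob ε *
    if M.Consistent M.utilityConnected o d ε then M.downUtil (M.ctxVal o d ε) else 0

theorem ctx_eq_iff_consistent {π : M.Policy} {ε : M.Env} {o : M.Ctx} :
    M.ctx π ε = o ↔ M.Consistent M.utilityConnectedᶜ o (π o (ε M.decision)) ε ∧
      M.Consistent M.utilityConnected o (π o (ε M.decision)) ε := by
  rw [ctx_eq_iff]
  constructor
  · exact fun h => ⟨fun w hw _ => h w hw, fun w hw _ => h w hw⟩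
  · intro h w hw
    by_cases hC : w ∈ M.utilityConnected
    · exact h.2 w hw hC
    · exact h.1 w hw hC

theorem consistent_compl_congr (o : M.Ctx) (d d' : M.dom M.decision) {ε ε' : M.Env}
    (hε : ∀ v ∉ M.utilityConnected, ε v = ε' v) :
    M.Consistent M.utilityConnectedᶜ o d ε ↔ M.Consistent M.utilityConnectedᶜ o d' ε' := by
  refine forall₃_congr fun w hw hC => ?_
  rw [M.natVal_congr_of_not_mem o d d' hε _ hC (.single hw)]

theorem consistent_congr {o o' : M.Ctx} (d : M.dom M.decision) {ε ε' : M.Env}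
    (ho : ∀ w (hw : M.edge w M.decision),
      (w ∈ M.utilityConnected ∨ ∃ c ∈ M.utilityConnected, M.edge w c) → o w hw = o' w hw)
    (hε : ∀ v ∈ M.utilityConnected, ε v = ε' v) :
    M.Consistent M.utilityConnected o d ε ↔ M.Consistent M.utilityConnected o' d ε' := by
  refine forall₃_congr fun w hw hC => ?_
  rw [M.natVal_congr_of_mem d ho hε _ hC, ho w hw (Or.inl hC)]

theorem downUtil_ctxVal_congr {o o' : M.Ctx} (d : M.dom M.decision) {ε ε' : M.Env}
    (ho : ∀ w (hw : M.edge w M.decision),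
      (w ∈ M.utilityConnected ∨ ∃ c ∈ M.utilityConnected, M.edge w c) → o w hw = o' w hw)
    (hε : ∀ v ∈ M.utilityConnected, ε v = ε' v) :
    M.downUtil (M.ctxVal o d ε) = M.downUtil (M.ctxVal o' d ε') := by
  refine Finset.sum_congr rfl fun u hu => ?_
  obtain ⟨hu, huD⟩ := Finset.mem_filter.1 hu
  have hobs := not_or.1 (CID.not_mem_observed_of_mem_utility hu)
  rw [M.ctxVal_eq_natVal _ _ _ hobs.1 hobs.2, M.ctxVal_eq_natVal _ _ _ hobs.1 hobs.2,
    M.natVal_congr_of_mem d ho hε _ (CID.mem_utilityConnected_of_mem_utility hu huD)]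

theorem score_congr {o o' : M.Ctx}
    (ho : ∀ w (hw : M.edge w M.decision),
      (w ∈ M.utilityConnected ∨ ∃ c ∈ M.utilityConnected, M.edge w c) → o w hw = o' w hw) :
    M.score o = M.score o' := by
  funext d
  refine Finset.sum_congr rfl fun ε _ => ?_
  simp only [M.consistent_congr d ho fun v _ => rfl, M.downUtil_ctxVal_congr d ho fun v _ => rfl]

theorem sum_downUtil_of_ctx (π : M.Policy) (o : M.Ctx) :
    ∑ ε, M.prob ε * (if M.ctx π ε = o then M.downUtil (M.val π ε) else 0) =
      ∑ ε, M.prob ε * if M.Consistent M.utilityConnectedᶜ o (π o (ε M.decision)) ε then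
        M.score o (π o (ε M.decision)) else 0 := by
  let φ : M.Env → M.Env → ℝ := fun ε ε' =>
    if M.Consistent M.utilityConnectedᶜ o (π o (ε M.decision)) ε then
      if M.Consistent M.utilityConnected o (π o (ε M.decision)) ε' then
        M.downUtil (M.ctxVal o (π o (ε M.decision)) ε') else 0
    else 0
  have hφ : ∀ ε₁ ε₂ ε₁' ε₂', (∀ v ∉ M.utilityConnected, ε₁ v = ε₁' v) →
      (∀ v ∈ M.utilityConnected, ε₂ v = ε₂' v) → φ ε₁ ε₂ = φ ε₁' ε₂' := by
    intro ε₁ ε₂ ε₁' ε₂' h₁ h₂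
    simp only [φ, h₁ M.decision CID.decision_not_mem_utilityConnected,
      M.consistent_compl_congr o (π o (ε₁' M.decision)) (π o (ε₁' M.decision)) h₁,
      M.consistent_congr (π o (ε₁' M.decision)) (fun w hw _ => rfl) h₂,
      M.downUtil_ctxVal_congr (π o (ε₁' M.decision)) (fun w hw _ => rfl) h₂]
  calc _ = ∑ ε, M.prob ε * φ ε ε := by
        refine Finset.sum_congr rfl fun ε _ => ?_
        congr 1
        by_cases h : M.ctx π ε = o
        · have h' := M.ctx_eq_iff_consistent.1 h
          simp only [φ, h, h'.1, h'.2, if_true]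
          rw [M.val_eq_ctxVal_of_ctx_eq h]
        · have h' := mt M.ctx_eq_iff_consistent.2 h
          simp only [φ, h, if_false]
          split_ifs with h1 h2
          · exact absurd ⟨h1, h2⟩ h'
          all_goals rfl
    _ = _ := by
        rw [M.sum_prob_mul_diag _ φ hφ]
        refine Finset.sum_congr rfl fun ε _ => ?_
        congr 1
        by_cases h : M.Consistent M.utilityConnectedᶜ o (π o (ε M.decision)) ε <;>
          simp [φ, h, score]

/-- A decision maximising `g`. -/
def argmax (g : M.dom M.decision → ℝ) : M.dom M.decision :=
  Classical.choose (Finite.exists_max g)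

theorem le_argmax (g : M.dom M.decision → ℝ) (d : M.dom M.decision) : g d ≤ g (M.argmax g) :=
  Classical.choose_spec (Finite.exists_max g) d

/-- The policy that maximises the score in every context. -/
def scorePolicy : M.Policy := fun o _ => M.argmax (M.score o)

theorem EU_eq (π : M.Policy) :
    M.EU π = ∑ ε, M.prob ε * (∑ v ∈ M.utility with
        ¬ Relation.ReflTransGen M.edge M.decision v, M.utilVal v (M.val π ε v)) +
      ∑ ε, M.prob ε * M.downUtil (M.val π ε) := by
  rw [← Finset.sum_add_distrib]
  refine Finset.sum_congr rfl fun ε _ => ?_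
  rw [← mul_add, add_comm]
  congr 1
  exact (Finset.sum_filter_add_sum_filter_not _ _ _).symm

theorem optimal_scorePolicy : M.Optimal M.scorePolicy := by
  intro π
  rw [EU_eq, EU_eq]
  refine add_le_add (le_of_eq ?_) ?_
  · refine Finset.sum_congr rfl fun ε _ => ?_
    congr 1
    refine Finset.sum_congr rfl fun v hv => ?_
    rw [M.val_congr_of_not_reflTransGen π M.scorePolicy ε (Finset.mem_filter.1 hv).2]
  · have : Fintype M.Ctx := Fintype.ofFinite _
    have expand : ∀ π : M.Policy, ∑ ε, M.prob ε * M.downUtil (M.val π ε) =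
        ∑ o : M.Ctx, ∑ ε, M.prob ε *
          (if M.ctx π ε = o then M.downUtil (M.val π ε) else 0) := by
      intro π
      rw [Finset.sum_comm]
      refine Finset.sum_congr rfl fun ε _ => ?_
      rw [← Finset.mul_sum, Finset.sum_ite_eq]
      simp
    rw [expand, expand]
    refine Finset.sum_le_sum fun o _ => ?_
    rw [sum_downUtil_of_ctx, sum_downUtil_of_ctx]
    refine Finset.sum_le_sum fun ε _ => mul_le_mul_of_nonneg_left ?_ (M.prob_nonneg ε)
    simp only [M.consistent_compl_congr o (π o (ε M.decision))
      (M.scorePolicy o (ε M.decision)) fun v _ => rfl]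
    split_ifs
    · exact M.le_argmax _ _
    · exact le_rfl

end SCIM

end

/-- **Response incentive graphical criterion: soundness.**
If for every parent `W` of the decision `D` and every utility node `U` it fails to hold
that simultaneously there is a directed path `X ⇝ W`, a directed path `D ⇝ U`, and `W`
is d-connected to `U` given `({D} ∪ Pa_D) \ {W}`, then no SCIM compatible with `G` has
a response incentive on `X ≠ D`. -/
theorem response_incentive_criterion_soundness
    {V : Type} [Fintype V] [DecidableEq V] (G : CID V) (X : V) (hX : X ≠ G.decision)
    (h : ∀ W, G.edge W G.decision → ∀ u ∈ G.utility,
      ¬ (Relation.ReflTransGen G.edge X W ∧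
         Relation.ReflTransGen G.edge G.decision u ∧
         ¬ DSep G.edge {W} {u} (({G.decision} ∪ {w | G.edge w G.decision}) \ {W}))) :
    ∀ M : SCIM V, M.toCID = G → ¬ M.ResponseIncentive X := by
  rintro M rfl hRI
  obtain ⟨x, ε, hne⟩ := hRI M.scorePolicy M.optimal_scorePolicy
  refine hne ?_
  rw [M.valDo_single_decision _ hX, M.val_decision]
  refine congrArg M.argmax (M.score_congr fun w hw hwC => ?_)
  refine M.valDo_single_of_not_reflTransGen _ x ε fun hXw => ?_
  obtain ⟨u, hu, hDu, hsep⟩ := CID.exists_not_dsep_of_utilityConnected hw hwC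
  exact h w hw u hu ⟨hXw, hDu, hsep⟩
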